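/- Let λ : ℤ₊ → ℝ satisfy (UB) and let N ≥ 1. Then 𝔥_N(x) > 0 for every x ∈ W^N, and 𝔥_N is harmonic for the Karlin–McGregor semigroup: for all t ≥ 0 and x ∈ W^N, Σ_{y ∈ W^N} det( e^{tL}(x_i, y_j) )_{i,j=1}^N · 𝔥_N(y) = 𝔥_N(x), the series converging absolutely. -/

import Mathlib

open Complex MeasureTheory Finset
open scoped Real ComplexOrder

/-- ψ_x(w) = ∏_{k=0}^{x} λ(k)/(λ(k)−w). -/
noncomputable def psiF (lam : ℕ → ℝ) (x : ℕ) (w : ℂ) : ℂ :=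
  ∏ k ∈ Finset.range (x + 1), (lam k : ℂ) / ((lam k : ℂ) - w)

/-- p_x(w) = ∏_{k=0}^{x−1} (λ(k)−w)/λ(k). -/
noncomputable def pF (lam : ℕ → ℝ) (x : ℕ) (w : ℂ) : ℂ :=
  ∏ k ∈ Finset.range x, (((lam k : ℂ) - w) / (lam k : ℂ))

/-- e^{tL}(x,y) := −(1/λ(y))·(1/(2πi)) ∮_{|w|=R} ψ_y(w) p_x(w) e^{−tw} dw,
the contour being the counterclockwise circle of radius R centred at 0. -/
noncomputable def eL (lam : ℕ → ℝ) (R t : ℝ) (x y : ℕ) : ℂ :=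
  -(1 / (lam y : ℂ)) * ((2 * (Real.pi : ℂ) * Complex.I)⁻¹ *
    ∮ w in C(0, R), psiF lam y w * pF lam x w * Complex.exp (-(t : ℂ) * w))

/-- y ≺ x : interlacing, x_1 ≤ y_1 < x_2 ≤ y_2 < ⋯ ≤ y_N < x_{N+1}.
(Membership of (y,x) in W^{N,N+1} is exactly this condition.) -/
def Interlace {N : ℕ} (y : Fin N → ℕ) (x : Fin (N + 1) → ℕ) : Prop :=
  ∀ i : Fin N, x i.castSucc ≤ y i ∧ y i < x i.succ

instance {N : ℕ} (y : Fin N → ℕ) (x : Fin (N + 1) → ℕ) : Decidable (Interlace y x) :=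
  inferInstanceAs (Decidable (∀ i : Fin N, x i.castSucc ≤ y i ∧ y i < x i.succ))

/-- 𝔥_N, defined recursively: 𝔥_1 ≡ 1 and 𝔥_{N+1}(x) = Σ_{y ≺ x} ∏ λ(y_i)⁻¹ 𝔥_N(y)
(so 𝔥_1(x) = 1 since the empty interlacing condition is vacuous and the unique
y : Fin 0 → ℕ contributes the empty product). -/
noncomputable def hfun (lam : ℕ → ℝ) : (N : ℕ) → (Fin N → ℕ) → ℝ
  | 0, _ => 1
  | (N + 1), x => ∑' y : { y : Fin N → ℕ // Interlace y x },
      (∏ i, (lam (y.1 i))⁻¹) * hfun lam N y.1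

/-- The iterated antiderivatives of `1` for the operator `f ↦ λ (f (· + 1) - f)`. -/
noncomputable def iterAntideriv (lam : ℕ → ℝ) : ℕ → ℕ → ℝ
  | 0, _ => 1
  | j + 1, x => ∑ y ∈ Finset.range x, (lam y)⁻¹ * iterAntideriv lam j y

section IterAntideriv

variable {lam : ℕ → ℝ}

lemma iterAntideriv_succ_succ (j x : ℕ) :
    iterAntideriv lam (j + 1) (x + 1) =
      iterAntideriv lam (j + 1) x + (lam x)⁻¹ * iterAntideriv lam j x := by
  simp [iterAntideriv, Finset.sum_range_succ]

lemma iterAntideriv_succ_zero (j : ℕ) : iterAntideriv lam (j + 1) 0 = 0 := by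
  simp [iterAntideriv]

lemma norm_iterAntideriv_le {s : ℝ} (hs : 0 < s) (hlb : ∀ x, s ≤ lam x) (j x : ℕ) :
    ‖iterAntideriv lam j x‖ ≤ (s⁻¹) ^ j * (x : ℝ) ^ j := by
  induction j generalizing x with
  | zero => simp [iterAntideriv]
  | succ j ih =>
    calc ‖iterAntideriv lam (j + 1) x‖
        ≤ ∑ y ∈ Finset.range x, ‖(lam y)⁻¹ * iterAntideriv lam j y‖ := norm_sum_le _ _
      _ ≤ ∑ y ∈ Finset.range x, s⁻¹ * ((s⁻¹) ^ j * (x : ℝ) ^ j) := by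
          refine Finset.sum_le_sum fun y hy => ?_
          have hyx : (y : ℝ) ≤ x := by exact_mod_cast (Finset.mem_range.1 hy).le
          have hpos : 0 < lam y := hs.trans_le (hlb y)
          rw [norm_mul, norm_inv, Real.norm_of_nonneg hpos.le]
          gcongr
          · exact hlb y
          · exact (ih y).trans (by gcongr)
      _ = (s⁻¹) ^ (j + 1) * (x : ℝ) ^ (j + 1) := by
          rw [Finset.sum_const, Finset.card_range, nsmul_eq_mul]; ring

lemma pF_eq_sum (h0 : ∀ k, lam k ≠ 0) (w : ℂ) {x n : ℕ} (hxn : x < n) :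
    pF lam x w = ∑ i ∈ Finset.range n, (iterAntideriv lam i x : ℂ) * (-w) ^ i := by
  induction x generalizing n with
  | zero =>
    obtain ⟨n, rfl⟩ : ∃ m, n = m + 1 := ⟨n - 1, by omega⟩
    rw [Finset.sum_range_succ']
    simp [pF, iterAntideriv]
  | succ x ih =>
    obtain ⟨n, rfl⟩ : ∃ m, n = m + 1 := ⟨n - 1, by omega⟩
    have hl : (lam x : ℂ) ≠ 0 := by exact_mod_cast h0 x
    have h1 : pF lam (x + 1) w = pF lam x w + -w * (lam x : ℂ)⁻¹ * pF lam x w := by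
      rw [pF, Finset.prod_range_succ, ← pF]
      field_simp
      ring
    rw [h1]
    nth_rw 1 [ih (n := n + 1) (by omega)]
    rw [ih (n := n) (by omega), Finset.sum_range_succ', Finset.sum_range_succ', Finset.mul_sum]
    simp only [iterAntideriv_succ_succ]
    push_cast
    simp only [add_mul, Finset.sum_add_distrib]
    rw [add_right_comm]
    congr 1
    congr 1
    refine Finset.sum_congr rfl fun i _ => ?_
    ring

end IterAntideriv

section Determinant

variable {lam : ℕ → ℝ}

lemma Interlace.strictMono {N : ℕ} {y : Fin N → ℕ} {x : Fin (N + 1) → ℕ} (h : Interlace y x) :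
    StrictMono y := by
  cases N with
  | zero => exact fun i => i.elim0
  | succ N =>
    rw [Fin.strictMono_iff_lt_succ]
    intro i
    have h1 := (h i.castSucc).2
    have h2 := (h i.succ).1
    rw [Fin.succ_castSucc] at h1
    exact h1.trans_le h2

lemma interlace_iff_mem_piFinset {N : ℕ} {y : Fin N → ℕ} {x : Fin (N + 1) → ℕ} :
    Interlace y x ↔
      y ∈ Fintype.piFinset fun i : Fin N => Finset.Ico (x i.castSucc) (x i.succ) := by
  simp [Interlace, Fintype.mem_piFinset]

lemma hfun_succ_eq_sum {N : ℕ} (x : Fin (N + 1) → ℕ) :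
    hfun lam (N + 1) x =
      ∑ y ∈ Fintype.piFinset fun i : Fin N => Finset.Ico (x i.castSucc) (x i.succ),
        (∏ i, (lam (y i))⁻¹) * hfun lam N y := by
  rw [hfun, ← Finset.tsum_subtype]
  exact (Equiv.subtypeEquivRight fun y => interlace_iff_mem_piFinset).tsum_eq
    (fun y : {y // y ∈ Fintype.piFinset fun i : Fin N => Finset.Ico (x i.castSucc) (x i.succ)} =>
      (∏ i, (lam (y.1 i))⁻¹) * hfun lam N y.1)

lemma hfun_pos (hpos : ∀ k, 0 < lam k) {N : ℕ} {x : Fin N → ℕ} (hx : StrictMono x) :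
    0 < hfun lam N x := by
  induction N with
  | zero => simp [hfun]
  | succ N ih =>
    rw [hfun_succ_eq_sum]
    refine Finset.sum_pos (fun y hy => ?_) ⟨fun i => x i.castSucc, ?_⟩
    · exact mul_pos (Finset.prod_pos fun i _ => inv_pos.2 (hpos _))
        (ih (interlace_iff_mem_piFinset.2 hy).strictMono)
    · simpa [Fintype.mem_piFinset] using fun i : Fin N => hx i.castSucc_lt_succ

lemma iterAntideriv_sub_eq_sum_Ico (j : ℕ) {a b : ℕ} (h : a ≤ b) :
    iterAntideriv lam (j + 1) b - iterAntideriv lam (j + 1) a =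
      ∑ y ∈ Finset.Ico a b, (lam y)⁻¹ * iterAntideriv lam j y := by
  rw [Finset.sum_Ico_eq_sub _ h, iterAntideriv, iterAntideriv]

lemma hfun_eq_det {N : ℕ} {x : Fin N → ℕ} (hx : StrictMono x) :
    hfun lam N x = (Matrix.of fun i j : Fin N => iterAntideriv lam j (x i)).det := by
  induction N with
  | zero => simp [hfun]
  | succ N ih =>
    let D : Matrix (Fin N) (Fin N) ℝ := Matrix.of fun i j =>
      ∑ y ∈ Finset.Ico (x i.castSucc) (x i.succ), (lam y)⁻¹ * iterAntideriv lam j y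
    let B : Matrix (Fin (N + 1)) (Fin (N + 1)) ℝ := Matrix.of fun i j =>
      Fin.cases (iterAntideriv lam j (x 0))
        (fun i' => iterAntideriv lam j (x i'.succ) - iterAntideriv lam j (x i'.castSucc)) i
    have hB : (Matrix.of fun i j : Fin (N + 1) => iterAntideriv lam j (x i)).det = B.det :=
      Matrix.det_eq_of_forall_row_eq_smul_add_pred (fun _ => 1) (fun j => rfl)
        (fun i j => by simp [B])
    have hBD : B.det = D.det := by
      rw [Matrix.det_succ_column_zero, Fin.sum_univ_succ]
      have : ∀ i : Fin N, B i.succ 0 = 0 := fun i => by simp [B, iterAntideriv]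
      simp only [this]
      have h00 : B 0 0 = 1 := by simp [B, iterAntideriv]
      simp only [h00, mul_zero, zero_mul, Finset.sum_const_zero, add_zero, Fin.val_zero, pow_zero,
        one_mul]
      congr 1
      ext i j
      simp only [Matrix.submatrix_apply, B, D, Matrix.of_apply, Fin.zero_succAbove, Fin.cases_succ,
        Fin.val_succ]
      exact iterAntideriv_sub_eq_sum_Ico _ (hx i.castSucc_lt_succ).le
    have hD : D = fun i => ∑ y ∈ Finset.Ico (x i.castSucc) (x i.succ),
        (fun j : Fin N => (lam y)⁻¹ * iterAntideriv lam j y) := by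
      ext i j
      simp [D, Finset.sum_apply]
    rw [hB, hBD, hfun_succ_eq_sum, hD]
    change _ = Matrix.detRowAlternating.toMultilinearMap _
    rw [MultilinearMap.map_sum_finset]
    refine Finset.sum_congr rfl fun y hy => ?_
    rw [ih (interlace_iff_mem_piFinset.2 hy).strictMono]
    exact (Matrix.det_mul_column (fun i => (lam (y i))⁻¹) _).symm

end Determinant

section CauchyBinet

lemma hasSum_mul_prod {ι κ : Type*} {f : ι → ℂ} {g : κ → ℂ} {a b : ℂ} (hf : HasSum f a)
    (hg : HasSum g b) : HasSum (fun p : ι × κ => f p.1 * g p.2) (a * b) :=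
  hf.mul hg (summable_mul_of_summable_norm hf.summable.norm hg.summable.norm)

lemma hasSum_prod_pi {N : ℕ} {f : Fin N → ℕ → ℂ} {a : Fin N → ℂ}
    (hf : ∀ i, HasSum (f i) (a i)) :
    HasSum (fun y : Fin N → ℕ => ∏ i, f i (y i)) (∏ i, a i) := by
  induction N with
  | zero => simp
  | succ N ih =>
    have h := ih fun i => hf i.succ
    have hm := hasSum_mul_prod (hf 0) h
    rw [Fin.prod_univ_succ, ← (Fin.consEquiv fun _ : Fin (N + 1) => ℕ).hasSum_iff]
    convert hm using 2 with p
    simp [Fin.prod_univ_succ, Fin.consEquiv]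

/-- The Cauchy–Binet formula for absolutely convergent infinite matrix products. -/
lemma hasSum_det_mul_det {N : ℕ} {a : Fin N → ℕ → ℂ} {b : ℕ → Fin N → ℂ}
    {c : Matrix (Fin N) (Fin N) ℂ} (h : ∀ i j, HasSum (fun y => a i y * b y j) (c i j)) :
    HasSum (fun y : {y : Fin N → ℕ // StrictMono y} =>
      (Matrix.of fun i j => a i (y.1 j)).det * (Matrix.of fun i j => b (y.1 i) j).det) c.det := by
  have hfull : HasSum (fun y : Fin N → ℕ =>
      (Matrix.of fun i j => a i (y j)).det * ∏ j, b (y j) j) c.det := by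
    simp only [Matrix.det_apply', Finset.sum_mul, Matrix.of_apply]
    refine hasSum_sum fun σ _ => ?_
    have := (hasSum_prod_pi fun j => h (σ j) j).mul_left ((Equiv.Perm.sign σ : ℤ) : ℂ)
    simpa only [Finset.prod_mul_distrib, mul_assoc] using this
  let g : {y : Fin N → ℕ // StrictMono y} × Equiv.Perm (Fin N) → Fin N → ℕ := fun p => p.1.1 ∘ p.2
  have hg : Function.Injective g := by
    rintro ⟨⟨y, hy⟩, σ⟩ ⟨⟨z, hz⟩, τ⟩ he
    have he' : y ∘ σ = z ∘ τ := he
    have hyz : y = z := by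
      refine (StrictMono.range_inj hy hz).1 ?_
      rw [← σ.surjective.range_comp y, he', τ.surjective.range_comp]
    subst hyz
    have : σ = τ := Equiv.ext fun i => hy.injective (congrFun he' i)
    rw [this]
  have hrange : ∀ y : Fin N → ℕ, y ∉ Set.range g →
      (Matrix.of fun i j => a i (y j)).det * ∏ j, b (y j) j = 0 := by
    intro y hy
    have hinj : ¬ Function.Injective y := fun hinj => hy
      ⟨(⟨y ∘ Tuple.sort y, (Tuple.monotone_sort y).strictMono_of_injective
        (hinj.comp (Tuple.sort y).injective)⟩, (Tuple.sort y)⁻¹), by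
          ext i; simp [g]⟩
    obtain ⟨i, j, hij, hne⟩ : ∃ i j, y i = y j ∧ i ≠ j := by
      simpa [Function.Injective] using hinj
    rw [Matrix.det_zero_of_column_eq hne (fun k => by simp [hij]), zero_mul]
  have hprod := (hg.hasSum_iff hrange).2 hfull
  convert hprod.prod_fiberwise fun y => hasSum_fintype _ using 2 with y
  rw [Matrix.det_apply' (Matrix.of fun i j => b (y.1 i) j), Finset.mul_sum]
  refine Finset.sum_congr rfl fun σ _ => ?_
  have hperm := Matrix.det_permute' σ (Matrix.of fun i j => a i (y.1 j))
  simp only [g, Function.comp_apply, Matrix.of_apply]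
  rw [← mul_assoc, mul_comm (Matrix.det _), ← hperm]
  rfl

end CauchyBinet

section Contour

lemma hasSum_circleIntegral {F : ℕ → ℂ → ℂ} {f : ℂ → ℂ} {c : ℂ} {R : ℝ} {u : ℕ → ℝ} (hR : 0 ≤ R)
    (hF : ∀ n, ContinuousOn (F n) (Metric.sphere c R)) (hu : Summable u)
    (hb : ∀ n, ∀ w ∈ Metric.sphere c R, ‖F n w‖ ≤ u n)
    (hf : ∀ w ∈ Metric.sphere c R, HasSum (fun n => F n w) (f w)) :
    HasSum (fun n => ∮ w in C(c, R), F n w) (∮ w in C(c, R), f w) := by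
  have hmem : ∀ θ, circleMap c R θ ∈ Metric.sphere c R := circleMap_mem_sphere c hR
  refine intervalIntegral.hasSum_integral_of_dominated_convergence (fun n _ => R * u n)
    (fun n => ?_) (fun n => ?_) ?_ ?_ ?_
  · have : Continuous fun θ => deriv (circleMap c R) θ • F n (circleMap c R θ) := by
      simp only [deriv_circleMap, smul_eq_mul]
      exact (by fun_prop : Continuous fun θ => circleMap 0 R θ * Complex.I).mul
        ((hF n).comp_continuous (continuous_circleMap c R) hmem)
    exact this.aestronglyMeasurable
  · refine Filter.Eventually.of_forall fun θ _ => ?_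
    rw [norm_smul, deriv_circleMap, norm_mul, norm_circleMap_zero, Complex.norm_I, mul_one,
      abs_of_nonneg hR]
    exact mul_le_mul_of_nonneg_left (hb n _ (hmem θ)) hR
  · exact Filter.Eventually.of_forall fun θ _ => hu.mul_left R
  · exact intervalIntegrable_const
  · exact Filter.Eventually.of_forall fun θ _ => (hf _ (hmem θ)).const_smul _

variable {lam : ℕ → ℝ} {s M R : ℝ}

lemma ofReal_sub_ne_zero (hs : 0 < s) (hlb : ∀ x, s ≤ lam x) (hub : ∀ x, lam x ≤ M) {w : ℂ}
    (hw : M < ‖w‖) (k : ℕ) : (lam k : ℂ) - w ≠ 0 := by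
  intro h
  rw [← sub_eq_zero.1 h, Complex.norm_real, Real.norm_of_nonneg (hs.le.trans (hlb k))] at hw
  exact absurd (hub k) hw.not_ge

lemma differentiableAt_eL_integrand (hs : 0 < s) (hlb : ∀ x, s ≤ lam x) (hub : ∀ x, lam x ≤ M)
    (t : ℝ) (x y : ℕ) {w : ℂ} (hw : M < ‖w‖) :
    DifferentiableAt ℂ
      (fun w => psiF lam y w * pF lam x w * Complex.exp (-(t : ℂ) * w)) w := by
  have hne := ofReal_sub_ne_zero hs hlb hub hw
  have h1 : DifferentiableAt ℂ (fun w => psiF lam y w) w := by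
    unfold psiF
    exact DifferentiableAt.fun_finsetProd fun k _ => by
      have := hne k
      fun_prop (disch := assumption)
  have h2 : DifferentiableAt ℂ (fun w => pF lam x w) w := by
    unfold pF
    exact DifferentiableAt.fun_finsetProd fun k _ => by fun_prop
  fun_prop

lemma eL_eq_of_le (hs : 0 < s) (hlb : ∀ x, s ≤ lam x) (hub : ∀ x, lam x ≤ M) {R' : ℝ}
    (hR : M < R) (hRR' : R ≤ R') (t : ℝ) (x y : ℕ) : eL lam R t x y = eL lam R' t x y := by
  have hM : 0 < M := hs.trans_le ((hlb 0).trans (hub 0))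
  rw [eL, eL, Complex.circleIntegral_eq_of_differentiable_on_annulus_off_countable (hM.trans hR)
    hRR' Set.countable_empty]
  · intro w hw
    refine (differentiableAt_eL_integrand hs hlb hub t x y ?_).continuousAt.continuousWithinAt
    have := hw.2
    simp only [Metric.mem_ball, dist_zero_right, not_lt] at this
    linarith
  · intro w hw
    refine differentiableAt_eL_integrand hs hlb hub t x y ?_
    have := hw.1.2
    simp only [Metric.mem_closedBall, dist_zero_right, not_le] at this
    linarith

lemma norm_prod_div_sub_le (hs : 0 < s) (hlb : ∀ x, s ≤ lam x) (hub : ∀ x, lam x ≤ M) {w : ℂ}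
    (hw : 3 * M ≤ ‖w‖) (n : ℕ) :
    ‖∏ k ∈ Finset.range n, (lam k : ℂ) / ((lam k : ℂ) - w)‖ ≤ (1 / 2) ^ n := by
  rw [norm_prod]
  refine (Finset.prod_le_prod (g := fun _ => (1 / 2 : ℝ)) (fun k _ => norm_nonneg _)
    fun k _ => ?_).trans (by simp)
  have hk : 0 < lam k := hs.trans_le (hlb k)
  have hn : ‖(lam k : ℂ)‖ = lam k := by rw [Complex.norm_real, Real.norm_of_nonneg hk.le]
  have h1 : ‖w‖ - ‖(lam k : ℂ)‖ ≤ ‖(lam k : ℂ) - w‖ := norm_sub_rev w _ ▸ norm_sub_norm_le _ _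
  have := hub k
  rw [hn] at h1
  rw [norm_div, hn, div_le_iff₀ (by linarith)]
  linarith

lemma norm_psiF_mul_iterAntideriv_le (hs : 0 < s) (hlb : ∀ x, s ≤ lam x)
    (hub : ∀ x, lam x ≤ M) {w : ℂ} (hw : 3 * M ≤ ‖w‖) (j y : ℕ) :
    ‖psiF lam y w * ((lam y : ℂ)⁻¹ * iterAntideriv lam j y)‖ ≤
      s⁻¹ ^ (j + 1) * ((y : ℝ) ^ j * (1 / 2) ^ y) := by
  have h1 : ‖psiF lam y w‖ ≤ (1 / 2) ^ y :=
    (norm_prod_div_sub_le hs hlb hub hw (y + 1)).trans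
      (pow_le_pow_of_le_one (by norm_num) (by norm_num) y.le_succ)
  have h2 : ‖(lam y : ℂ)⁻¹‖ ≤ s⁻¹ := by
    rw [norm_inv, Complex.norm_real, Real.norm_of_nonneg (hs.le.trans (hlb y))]
    gcongr
    exact hlb y
  have h3 : ‖(iterAntideriv lam j y : ℂ)‖ ≤ s⁻¹ ^ j * (y : ℝ) ^ j := by
    rw [Complex.norm_real]
    exact norm_iterAntideriv_le hs hlb j y
  rw [norm_mul, norm_mul]
  calc _ ≤ (1 / 2) ^ y * (s⁻¹ * (s⁻¹ ^ j * (y : ℝ) ^ j)) := by gcongr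
    _ = _ := by ring

lemma summable_pow_mul_half_pow (s : ℝ) (j : ℕ) :
    Summable fun y : ℕ => s⁻¹ ^ (j + 1) * ((y : ℝ) ^ j * (1 / 2) ^ y) :=
  (summable_pow_mul_geometric_of_norm_lt_one j (r := (1 / 2 : ℝ)) (by norm_num)).mul_left _

lemma hasSum_psiF_mul_iterAntideriv (hs : 0 < s) (hlb : ∀ x, s ≤ lam x)
    (hub : ∀ x, lam x ≤ M) {w : ℂ} (hw : 3 * M ≤ ‖w‖) (j : ℕ) :
    HasSum (fun y => psiF lam y w * ((lam y : ℂ)⁻¹ * iterAntideriv lam j y))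
      (((-w) ^ (j + 1))⁻¹) := by
  have hM : 0 < M := hs.trans_le ((hlb 0).trans (hub 0))
  have hw0 : w ≠ 0 := norm_pos_iff.1 (by linarith)
  have hne := ofReal_sub_ne_zero hs hlb hub (w := w) (by linarith)
  have hsum : ∀ j, Summable fun y => psiF lam y w * ((lam y : ℂ)⁻¹ * iterAntideriv lam j y) :=
    fun j => .of_norm_bounded (summable_pow_mul_half_pow s j)
      fun y => norm_psiF_mul_iterAntideriv_le hs hlb hub hw j y
  let P : ℕ → ℂ := fun n => ∏ k ∈ Finset.range n, (lam k : ℂ) / ((lam k : ℂ) - w)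
  have hP : ∀ n, P n = (1 - w * (lam n : ℂ)⁻¹) * psiF lam n w := fun n => by
    have hl : (lam n : ℂ) ≠ 0 := by exact_mod_cast (hs.trans_le (hlb n)).ne'
    have := hne n
    rw [psiF, Finset.prod_range_succ]
    change P n = _ * (P n * _)
    field_simp
  have htend : ∀ j, Filter.Tendsto (fun n => P n * iterAntideriv lam j n) Filter.atTop (nhds 0) := by
    intro j
    have := (summable_pow_mul_geometric_of_norm_lt_one j (r := (1 / 2 : ℝ))
      (by norm_num)).tendsto_atTop_zero.const_mul (s⁻¹ ^ j)
    rw [mul_zero] at this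
    refine squeeze_zero_norm (fun n => ?_) this
    rw [norm_mul, Complex.norm_real]
    calc _ ≤ (1 / 2) ^ n * (s⁻¹ ^ j * (n : ℝ) ^ j) := by
          gcongr
          · exact norm_prod_div_sub_le hs hlb hub hw n
          · exact norm_iterAntideriv_le hs hlb j n
      _ = _ := by ring
  have htele : ∀ j, Filter.Tendsto (fun n => ∑ y ∈ Finset.range n,
      (P (y + 1) * iterAntideriv lam j (y + 1) - P y * iterAntideriv lam j y)) Filter.atTop
      (nhds (0 - P 0 * iterAntideriv lam j 0)) := fun j => by
    simp only [Finset.sum_range_sub fun n => P n * (iterAntideriv lam j n : ℂ)]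
    exact (htend j).sub_const _
  induction j with
  | zero =>
    have h : HasSum (fun y => w * (psiF lam y w * ((lam y : ℂ)⁻¹ * iterAntideriv lam 0 y)))
        (0 - P 0 * iterAntideriv lam 0 0) := by
      refine ((hsum 0).mul_left w).hasSum_iff_tendsto_nat.2 ((htele 0).congr fun n => ?_)
      refine Finset.sum_congr rfl fun y _ => ?_
      rw [hP y, show P (y + 1) = psiF lam y w from rfl]
      simp only [iterAntideriv]
      push_cast
      ring
    have := h.mul_left w⁻¹
    simpa [P, iterAntideriv, hw0, inv_neg] using this
  | succ j ih =>
    have h : HasSum (fun y => psiF lam y w * ((lam y : ℂ)⁻¹ * iterAntideriv lam j y) +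
        w * (psiF lam y w * ((lam y : ℂ)⁻¹ * iterAntideriv lam (j + 1) y)))
        (0 - P 0 * iterAntideriv lam (j + 1) 0) := by
      refine ((hsum j).add ((hsum (j + 1)).mul_left w)).hasSum_iff_tendsto_nat.2
        ((htele (j + 1)).congr fun n => ?_)
      refine Finset.sum_congr rfl fun y _ => ?_
      rw [hP y, show P (y + 1) = psiF lam y w from rfl, iterAntideriv_succ_succ]
      push_cast
      ring
    have := (h.sub ih).mul_left w⁻¹
    simp only [add_sub_cancel_left, iterAntideriv_succ_zero, Complex.ofReal_zero, mul_zero,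
      sub_zero, zero_sub, inv_mul_cancel_left₀ hw0] at this
    rw [pow_succ (-w) (j + 1), mul_inv, inv_neg, mul_comm, neg_mul, ← mul_neg]
    exact this

end Contour

section Semigroup

/-- The matrix of the semigroup in the basis of iterated antiderivatives of `1`. -/
noncomputable def expCoeff (R t : ℝ) (i j : ℕ) : ℂ :=
  -((2 * (Real.pi : ℂ) * Complex.I)⁻¹ *
    ∮ w in C(0, R), (-w) ^ i * Complex.exp (-(t : ℂ) * w) * ((-w) ^ (j + 1))⁻¹)

lemma expCoeff_eq_zero_of_lt {R : ℝ} (hR : 0 < R) (t : ℝ) {i j : ℕ} (h : j < i) :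
    expCoeff R t i j = 0 := by
  obtain ⟨k, rfl⟩ := Nat.exists_eq_add_of_lt h
  rw [expCoeff, circleIntegral.integral_congr (g := fun w => (-w) ^ k * Complex.exp (-(t : ℂ) * w))
    hR.le, (Differentiable.diffContOnCl (by fun_prop)).circleIntegral_eq_zero hR.le, mul_zero,
    neg_zero]
  intro w hw
  have hw0 : w ≠ 0 := ne_zero_of_mem_sphere hR.ne' ⟨w, hw⟩
  have : (-w) ^ (j + 1) ≠ 0 := pow_ne_zero _ (neg_ne_zero.2 hw0)
  simp only
  rw [show j + k + 1 = (j + 1) + k by ring, pow_add]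
  field_simp

lemma expCoeff_self {R : ℝ} (hR : 0 < R) (t : ℝ) (j : ℕ) : expCoeff R t j j = 1 := by
  rw [expCoeff, circleIntegral.integral_congr
    (g := fun w => (w - 0)⁻¹ • -Complex.exp (-(t : ℂ) * w)) hR.le,
    Complex.circleIntegral_sub_center_inv_smul_of_differentiable_on_off_countable hR
      Set.countable_empty (by fun_prop) (fun z _ => by fun_prop)]
  · simp only [smul_eq_mul, mul_zero, Complex.exp_zero, mul_neg, mul_one, neg_neg]
    exact inv_mul_cancel₀ Complex.two_pi_I_ne_zero
  · intro w hw
    have hw0 : w ≠ 0 := ne_zero_of_mem_sphere hR.ne' ⟨w, hw⟩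
    have : (-w) ^ j ≠ 0 := pow_ne_zero _ (neg_ne_zero.2 hw0)
    simp only [sub_zero, smul_eq_mul, pow_succ]
    field_simp

variable {lam : ℕ → ℝ} {s M R : ℝ}

lemma hasSum_eL_mul_iterAntideriv (hs : 0 < s) (hlb : ∀ x, s ≤ lam x)
    (hub : ∀ x, lam x ≤ M) (hR : 3 * M ≤ R) (t : ℝ) {x n : ℕ} (hxn : x < n) (j : ℕ) :
    HasSum (fun y => eL lam R t x y * (iterAntideriv lam j y : ℂ))
      (∑ i ∈ Finset.range n, (iterAntideriv lam i x : ℂ) * expCoeff R t i j) := by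
  have hM : 0 < M := hs.trans_le ((hlb 0).trans (hub 0))
  have hR0 : 0 < R := by linarith
  have hnorm : ∀ w ∈ Metric.sphere (0 : ℂ) R, ‖w‖ = R := fun w hw => by simpa using hw
  have hlam : ∀ k, lam k ≠ 0 := fun k => (hs.trans_le (hlb k)).ne'
  let G : ℂ → ℂ := fun w => pF lam x w * Complex.exp (-(t : ℂ) * w)
  have hG : Continuous G := by
    simp only [G, pF]
    fun_prop
  obtain ⟨C, hC⟩ := (isCompact_sphere (0 : ℂ) R).exists_bound_of_continuousOn hG.continuousOn
  have hsum : HasSum (fun y => ∮ w in C(0, R),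
      psiF lam y w * pF lam x w * Complex.exp (-(t : ℂ) * w) *
        ((lam y : ℂ)⁻¹ * iterAntideriv lam j y))
      (∮ w in C(0, R), G w * ((-w) ^ (j + 1))⁻¹) := by
    refine hasSum_circleIntegral hR0.le (fun y w hw => ?_)
      ((summable_pow_mul_half_pow s j).mul_left C) (fun y w hw => ?_) (fun w hw => ?_)
    · have := (differentiableAt_eL_integrand hs hlb hub t x y
        (w := w) (by rw [hnorm w hw]; linarith)).continuousAt
      exact (this.mul_const _).continuousWithinAt
    · rw [show psiF lam y w * pF lam x w * Complex.exp (-(t : ℂ) * w) *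
          ((lam y : ℂ)⁻¹ * iterAntideriv lam j y) =
          G w * (psiF lam y w * ((lam y : ℂ)⁻¹ * iterAntideriv lam j y)) by simp only [G]; ring,
        norm_mul]
      exact mul_le_mul (hC w hw)
        (norm_psiF_mul_iterAntideriv_le hs hlb hub (by rw [hnorm w hw]; exact hR) j y)
        (norm_nonneg _) ((norm_nonneg _).trans (hC w hw))
    · refine ((hasSum_psiF_mul_iterAntideriv hs hlb hub
        (by rw [hnorm w hw]; exact hR) j).mul_left (G w)).congr_fun fun y => ?_
      simp only [G]
      ring
  have hval : -((2 * (Real.pi : ℂ) * Complex.I)⁻¹ * ∮ w in C(0, R), G w * ((-w) ^ (j + 1))⁻¹) =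
      ∑ i ∈ Finset.range n, (iterAntideriv lam i x : ℂ) * expCoeff R t i j := by
    have hint : ∀ i ∈ Finset.range n, CircleIntegrable (fun w => (iterAntideriv lam i x : ℂ) *
        ((-w) ^ i * Complex.exp (-(t : ℂ) * w) * ((-w) ^ (j + 1))⁻¹)) 0 R := fun i _ => by
      refine ContinuousOn.circleIntegrable hR0.le ?_
      have : ∀ w ∈ Metric.sphere (0 : ℂ) R, (-w) ^ (j + 1) ≠ 0 := fun w hw =>
        pow_ne_zero _ (neg_ne_zero.2 (ne_zero_of_mem_sphere hR0.ne' ⟨w, hw⟩))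
      fun_prop (disch := assumption)
    have hexp : ∀ w, G w * ((-w) ^ (j + 1))⁻¹ = ∑ i ∈ Finset.range n,
        (iterAntideriv lam i x : ℂ) *
          ((-w) ^ i * Complex.exp (-(t : ℂ) * w) * ((-w) ^ (j + 1))⁻¹) := fun w => by
      simp only [G, pF_eq_sum hlam w hxn, Finset.sum_mul]
      refine Finset.sum_congr rfl fun i _ => ?_
      ring
    simp only [hexp]
    rw [circleIntegral.integral_fun_sum hint, Finset.mul_sum, ← Finset.sum_neg_distrib]
    refine Finset.sum_congr rfl fun i _ => ?_
    rw [circleIntegral.integral_const_mul, expCoeff]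
    ring
  rw [← hval]
  have h := (hsum.mul_left (2 * (Real.pi : ℂ) * Complex.I)⁻¹).neg
  refine h.congr_fun fun y => ?_
  rw [eL]
  simp only [mul_comm _ ((lam y : ℂ)⁻¹ * (iterAntideriv lam j y : ℂ)),
    circleIntegral.integral_const_mul]
  ring

lemma hasSum_det_eL_mul_hfun (hs : 0 < s) (hlb : ∀ x, s ≤ lam x) (hub : ∀ x, lam x ≤ M)
    (hR : 3 * M ≤ R) (t : ℝ) {N : ℕ} {x : Fin N → ℕ} (hx : StrictMono x) :
    HasSum (fun y : {y : Fin N → ℕ // StrictMono y} =>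
      (Matrix.of fun i j => eL lam R t (x i) (y.1 j)).det * (hfun lam N y.1 : ℂ))
      (hfun lam N x : ℂ) := by
  have hM : 0 < M := hs.trans_le ((hlb 0).trans (hub 0))
  have hR0 : 0 < R := by linarith
  let H : (Fin N → ℕ) → Matrix (Fin N) (Fin N) ℂ := fun y =>
    Matrix.of fun i j => (iterAntideriv lam j (y i) : ℂ)
  have hH : ∀ y : Fin N → ℕ, StrictMono y → (hfun lam N y : ℂ) = (H y).det := fun y hy => by
    rw [hfun_eq_det hy]
    exact RingHom.map_det Complex.ofRealHom _
  let E : Matrix (Fin N) (Fin N) ℂ := Matrix.of fun i j => expCoeff R t i j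
  have hE : E.det = 1 := by
    have hU : E.IsUpperTriangular := fun i j hij => expCoeff_eq_zero_of_lt hR0 t hij
    rw [Matrix.det_of_isUpperTriangular hU]
    exact Finset.prod_eq_one fun i _ => expCoeff_self hR0 t i
  have hsum : ∀ i j : Fin N, HasSum
      (fun y => eL lam R t (x i) y * (iterAntideriv lam j y : ℂ)) ((H x * E) i j) := by
    intro i j
    convert hasSum_eL_mul_iterAntideriv hs hlb hub hR t (x := x i) (n := N + (x i + 1))
      (by omega) j using 1
    rw [Finset.sum_range_add, Finset.sum_eq_zero (s := Finset.range (x i + 1)), add_zero,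
      Matrix.mul_apply, ← Fin.sum_univ_eq_sum_range
        (fun k => (iterAntideriv lam k (x i) : ℂ) * expCoeff R t k j)]
    · rfl
    · intro k _
      rw [expCoeff_eq_zero_of_lt (i := N + k) (j := j) hR0 t (by omega), mul_zero]
  have h := hasSum_det_mul_det (b := fun y j => (iterAntideriv lam j y : ℂ)) hsum
  rw [Matrix.det_mul, hE, mul_one, ← hH x hx] at h
  convert h using 3 with y
  exact hH y.1 y.2

end Semigroup

/-- 𝔥_N is strictly positive on W^N and harmonic for the
Karlin–McGregor semigroup: Σ_{y ∈ W^N} det(e^{tL}(x_i,y_j)) 𝔥_N(y) = 𝔥_N(x),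
the series converging absolutely. -/
theorem stmt_9 (lam : ℕ → ℝ) (s M : ℝ) (hs : 0 < s)
    (hlb : ∀ x, s ≤ lam x) (hub : ∀ x, lam x ≤ M)
    (R : ℝ) (hR : M < R) (N : ℕ) (hN : 1 ≤ N) :
    (∀ x : Fin N → ℕ, StrictMono x → 0 < hfun lam N x) ∧
    ∀ t : ℝ, 0 ≤ t → ∀ x : Fin N → ℕ, StrictMono x →
      HasSum (fun y : { y : Fin N → ℕ // StrictMono y } =>
          (Matrix.of fun i j => eL lam R t (x i) (y.1 j)).det * (hfun lam N y.1 : ℂ))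
        ((hfun lam N x : ℂ)) ∧
      Summable (fun y : { y : Fin N → ℕ // StrictMono y } =>
          ‖(Matrix.of fun i j => eL lam R t (x i) (y.1 j)).det * (hfun lam N y.1 : ℂ)‖) := by
  refine ⟨fun x hx => hfun_pos (fun k => hs.trans_le (hlb k)) hx, fun t _ x hx => ?_⟩
  have hM : 0 < M := hs.trans_le ((hlb 0).trans (hub 0))
  have h := hasSum_det_eL_mul_hfun hs hlb hub (R := R + 2 * M) (by linarith) t hx
  simp only [← eL_eq_of_le hs hlb hub hR (show R ≤ R + 2 * M by linarith)] at h
  exact ⟨h, h.summable.norm⟩
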